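/- Let G be a connected graph of order n with σ_2 ≥ n − 2. Then G has a dominating path, i.e., a path P such that V(G) − V(P) is an independent set. (Corollary 15) -/

import Mathlib

open SimpleGraph

variable {V : Type*}

/-- A set of vertices is independent in `G`. -/
def IsIndSet (G : SimpleGraph V) (s : Set V) : Prop :=
  ∀ ⦃u⦄, u ∈ s → ∀ ⦃v⦄, v ∈ s → ¬ G.Adj u v

/-- The number of end-vertices (vertices of degree one) of a subgraph `H`. -/
noncomputable def endVertexCount {G : SimpleGraph V} (H : G.Subgraph) : ℕ :=
  {v : V | v ∈ H.verts ∧ (H.neighborSet v).ncard = 1}.ncard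

/-- `H` is a cycle; a single vertex and a single edge are regarded as
simple cycles of orders 1 and 2, respectively. -/
def IsCycleSubgraph {G : SimpleGraph V} (H : G.Subgraph) : Prop :=
  H.Connected ∧ (H.verts.ncard ≤ 2 ∨ ∀ v ∈ H.verts, (H.neighborSet v).ncard = 2)

/-- `H` is a `k`-ended tree in `G`: a tree with at most `k` end-vertices (leaves);
a cycle is regarded as a 1-ended tree. -/
def IsKEndedTree (G : SimpleGraph V) (k : ℕ) (H : G.Subgraph) : Prop :=
  (H.coe.IsTree ∧ endVertexCount H ≤ k) ∨ (1 ≤ k ∧ IsCycleSubgraph H)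

/-- `t k`: the order of a largest `k`-ended tree in `G`. -/
noncomputable def maxKEndedOrder (G : SimpleGraph V) (k : ℕ) : ℕ :=
  sSup {n | ∃ H : G.Subgraph, IsKEndedTree G k H ∧ H.verts.ncard = n}

/-- `σ m`: the minimum degree sum over independent sets of `m` vertices of `G`,
and `+∞` if the independence number of `G` is less than `m`. -/
noncomputable def minDegreeSum (G : SimpleGraph V) [Fintype V] [DecidableRel G.Adj]
    (m : ℕ) : ℕ∞ :=
  ⨅ s ∈ {s : Finset V | s.card = m ∧ IsIndSet G ↑s}, (∑ v ∈ s, G.degree v : ℕ∞)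

/-- In a connected graph, a cycle missing some vertex yields a path longer than the cycle's
vertex list. -/
lemma exists_longer_path_of_cycle {G : SimpleGraph V} (hG : G.Connected) {l : List V}
    (hne : l ≠ []) (hc : l.IsChain G.Adj) (hd : l.Nodup)
    (hclose : ∀ x ∈ l.getLast?, ∀ y ∈ l.head?, G.Adj x y) {z : V} (hz : z ∉ l) :
    ∃ l' : List V, l'.IsChain G.Adj ∧ l'.Nodup ∧ l.length < l'.length := by
  obtain ⟨a, ha⟩ := List.exists_mem_of_ne_nil l hne
  obtain ⟨p⟩ := hG.preconnected a z
  obtain ⟨d, -, hw, hd'⟩ := p.exists_boundary_dart {x | x ∈ l} ha hz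
  obtain ⟨s, t, rfl⟩ := List.append_of_mem hw
  have hdz : G.Adj d.snd d.fst := d.adj.symm
  obtain ⟨hs, ht, -⟩ := List.isChain_append.1 hc
  refine ⟨d.snd :: ((d.fst :: t) ++ s), ?_, ?_, ?_⟩
  · refine List.isChain_cons.2 ⟨by simpa using hdz, ht.append hs fun x hx y hy => ?_⟩
    exact hclose x (by simpa using hx) y (by simp [Option.mem_def.1 hy])
  · rw [List.nodup_cons]
    refine ⟨fun hmem => hd' (List.perm_append_comm.subset hmem), ?_⟩
    exact List.perm_append_comm.nodup_iff.1 hd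
  · simp
    omega

/-- If the ends of a path are joined to consecutive vertices of the path in crossing position,
the path's vertices can be rearranged into a cycle. -/
lemma exists_cycle_of_crossing {G : SimpleGraph V} {a b : List V} (ha : a ≠ []) (hb : b ≠ [])
    (hc : (a ++ b).IsChain G.Adj)
    (hlast : G.Adj (a.getLast ha) (b.getLast hb)) (hhead : G.Adj (b.head hb) (a.head ha)) :
    (a ++ b.reverse).IsChain G.Adj ∧
      ∀ x ∈ (a ++ b.reverse).getLast?, ∀ y ∈ (a ++ b.reverse).head?, G.Adj x y := by
  obtain ⟨h₁, h₂, -⟩ := List.isChain_append.1 hc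
  refine ⟨h₁.append (List.isChain_reverse.2 (h₂.imp fun _ _ h => h.symm)) ?_, ?_⟩
  · simp only [List.head?_reverse, List.getLast?_eq_some_getLast ha,
      List.getLast?_eq_some_getLast hb, Option.mem_def, Option.some.injEq]
    rintro _ rfl _ rfl
    exact hlast
  · simp only [List.head?_append, List.getLast?_append, List.getLast?_reverse,
      List.head?_eq_some_head ha, List.head?_eq_some_head hb, Option.some_or, Option.mem_def,
      Option.some.injEq]
    rintro _ rfl _ rfl
    exact hhead

/-- The degree sum of the ends of a longest path on `l.length` vertices that misses some vertex
of a connected graph is less than `l.length`, and the ends are distinct and nonadjacent. -/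
lemma degree_add_degree_lt_of_longest [Fintype V] {G : SimpleGraph V} [DecidableRel G.Adj]
    (hG : G.Connected) {l : List V} (hne : l ≠ []) (hc : l.IsChain G.Adj) (hd : l.Nodup)
    (hmax : ∀ l' : List V, l'.IsChain G.Adj → l'.Nodup → l'.length ≤ l.length)
    {z : V} (hz : z ∉ l) :
    l.head hne ≠ l.getLast hne ∧ ¬ G.Adj (l.head hne) (l.getLast hne) ∧
      G.degree (l.head hne) + G.degree (l.getLast hne) < l.length := by
  classical
  have hcyc : ∀ l' : List V, l'.Perm l → l'.IsChain G.Adj →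
      ¬ ∀ x ∈ l'.getLast?, ∀ y ∈ l'.head?, G.Adj x y := by
    intro l' hp hc' hclose
    obtain ⟨l'', h₁, h₂, h₃⟩ := exists_longer_path_of_cycle hG
      (fun h => hne (by simpa [h] using hp)) hc' (hp.nodup_iff.2 hd) hclose (z := z)
      (fun h => hz (hp.subset h))
    have := hmax l'' h₁ h₂
    have := hp.length_eq
    omega
  have hpos : 0 < l.length := List.length_pos_iff.2 hne
  have hhead : ∀ w, G.Adj (l.head hne) w → w ∈ l := by
    intro w hw
    by_contra hwl
    have := hmax (w :: l) (List.isChain_cons.2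
      ⟨by simpa [List.head?_eq_some_head hne] using hw.symm, hc⟩) (List.nodup_cons.2 ⟨hwl, hd⟩)
    simp at this
  have hlast : ∀ w, G.Adj (l.getLast hne) w → w ∈ l := by
    intro w hw
    by_contra hwl
    have := hmax (l ++ [w]) (hc.append (List.isChain_singleton w)
      (by simpa [List.getLast?_eq_some_getLast hne] using hw))
      (List.nodup_append.2 ⟨hd, by simp, by
        rintro a ha b hb rfl
        exact hwl (by simpa [List.mem_singleton.1 hb] using ha)⟩)
    simp at this
  have hadj : ¬ G.Adj (l.head hne) (l.getLast hne) := fun h =>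
    hcyc l (List.Perm.refl l) hc (by
      simpa [List.getLast?_eq_some_getLast hne, List.head?_eq_some_head hne] using h.symm)
  have hcross : ∀ i, i + 1 < l.length → G.Adj (l.head hne) (l.getD (i + 1) z) →
      ¬ G.Adj (l.getLast hne) (l.getD i z) := by
    intro i hi h₁ h₂
    have ha : l.take (i + 1) ≠ [] := by simpa using hne
    have hb : l.drop (i + 1) ≠ [] := by simpa using hi
    obtain ⟨h₃, h₄⟩ := exists_cycle_of_crossing (G := G) ha hb (by simpa using hc)
      (by
        rw [List.getD_eq_getElem _ _ (by omega)] at h₂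
        rw [List.getLast_drop, List.getLast_eq_getElem]
        convert h₂.symm using 1
        simp [List.getElem_take]
        grind)
      (by
        rw [List.getD_eq_getElem _ _ hi] at h₁
        simpa [List.head_drop, List.head_take] using h₁.symm)
    refine hcyc _ ?_ h₃ h₄
    exact ((List.reverse_perm _).append_left _).trans (by simp)
  refine ⟨fun heq => ?_, hadj, ?_⟩
  · have hlen : l.length = 1 := by
      rw [List.head_eq_getElem, List.getLast_eq_getElem, hd.getElem_inj_iff] at heq
      omega
    obtain ⟨a, rfl⟩ := List.length_eq_one_iff.1 hlen
    obtain ⟨p⟩ := hG.preconnected a z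
    obtain ⟨d, -, hw, hd'⟩ := p.exists_boundary_dart {a} rfl (by simpa using hz)
    have hw : d.fst = a := hw
    exact hd' (by simpa using hhead d.snd (by simpa [hw] using d.adj))
  · let S := (Finset.range (l.length - 1)).filter fun i => G.Adj (l.head hne) (l.getD (i + 1) z)
    let T := (Finset.range (l.length - 1)).filter fun i => G.Adj (l.getLast hne) (l.getD i z)
    have hS : G.degree (l.head hne) ≤ S.card := by
      rw [← G.card_neighborFinset_eq_degree]
      refine (Finset.card_le_card (t := S.image fun i => l.getD (i + 1) z) fun w hw => ?_).trans
        Finset.card_image_le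
      have hw : G.Adj (l.head hne) w := by simpa using hw
      obtain ⟨i, hi, rfl⟩ := List.getElem_of_mem (hhead w hw)
      obtain _ | i := i
      · exact absurd (List.head_eq_getElem hne) hw.ne
      · refine Finset.mem_image.2 ⟨i, ?_, List.getD_eq_getElem _ _ hi⟩
        refine Finset.mem_filter.2 ⟨Finset.mem_range.2 (by omega), ?_⟩
        rwa [List.getD_eq_getElem _ _ hi]
    have hT : G.degree (l.getLast hne) ≤ T.card := by
      rw [← G.card_neighborFinset_eq_degree]
      refine (Finset.card_le_card (t := T.image fun i => l.getD i z) fun w hw => ?_).trans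
        Finset.card_image_le
      have hw : G.Adj (l.getLast hne) w := by simpa using hw
      obtain ⟨i, hi, rfl⟩ := List.getElem_of_mem (hlast w hw)
      have hi' : i ≠ l.length - 1 := by
        rintro rfl
        exact hw.ne (List.getLast_eq_getElem hne)
      refine Finset.mem_image.2 ⟨i, ?_, List.getD_eq_getElem _ _ hi⟩
      refine Finset.mem_filter.2 ⟨Finset.mem_range.2 (by omega), ?_⟩
      rwa [List.getD_eq_getElem _ _ hi]
    have hdisj : Disjoint S T := Finset.disjoint_left.2 fun i hi hi' => by
      obtain ⟨hr, h₁⟩ := Finset.mem_filter.1 hi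
      have := Finset.mem_range.1 hr
      exact hcross i (by omega) h₁ (Finset.mem_filter.1 hi').2
    have hcard : (S ∪ T).card ≤ l.length - 1 := by
      simpa using Finset.card_le_card
        (Finset.union_subset (Finset.filter_subset _ _) (Finset.filter_subset _ _) :
          S ∪ T ⊆ Finset.range (l.length - 1))
    rw [Finset.card_union_of_disjoint hdisj] at hcard
    omega

/-- A finite nonempty graph has a longest path, given by its list of vertices. -/
lemma exists_longest_path [Fintype V] [Nonempty V] (G : SimpleGraph V) :
    ∃ l : List V, l ≠ [] ∧ l.IsChain G.Adj ∧ l.Nodup ∧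
      ∀ l' : List V, l'.IsChain G.Adj → l'.Nodup → l'.length ≤ l.length := by
  classical
  have hfin : {l : List V | l.IsChain G.Adj ∧ l.Nodup}.Finite :=
    (List.finite_length_le V (Fintype.card V)).subset fun l hl => hl.2.length_le_card
  obtain ⟨l, ⟨hc, hd⟩, hmax⟩ := Set.exists_max_image _ List.length hfin ⟨[], by simp⟩
  have hmax' : ∀ l' : List V, l'.IsChain G.Adj → l'.Nodup → l'.length ≤ l.length :=
    fun l' h₁ h₂ => hmax l' ⟨h₁, h₂⟩
  refine ⟨l, ?_, hc, hd, hmax'⟩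
  rintro rfl
  simpa using hmax' [Classical.arbitrary V] (by simp) (by simp)

/-- A degree-sum bound given by `minDegreeSum G 2` applies to every nonadjacent pair. -/
lemma minDegreeSum_two_le [Fintype V] (G : SimpleGraph V) [DecidableRel G.Adj] {u v : V}
    (hne : u ≠ v) (hadj : ¬ G.Adj u v) :
    minDegreeSum G 2 ≤ ((G.degree u + G.degree v : ℕ) : ℕ∞) := by
  classical
  refine (iInf₂_le ({u, v} : Finset V) ⟨Finset.card_pair hne, ?_⟩).trans ?_
  · rw [Finset.sum_pair hne]
    simp
  · intro x hx y hy
    have hadj' : ¬ G.Adj v u := fun h => hadj h.symm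
    simp only [Finset.coe_insert, Finset.coe_singleton, Set.mem_insert_iff,
      Set.mem_singleton_iff] at hx hy
    rcases hx with rfl | rfl <;> rcases hy with rfl | rfl <;> simp [hadj, hadj']

/-- **Corollary 15.** If `G` is connected of order `n` and `σ_2 ≥ n - 2`, then
`G` has a dominating path. -/
theorem corollary15 [Fintype V] (G : SimpleGraph V) [DecidableRel G.Adj]
    (hG : G.Connected)
    (h : (Fintype.card V : ℕ∞) ≤ minDegreeSum G 2 + 2) :
    ∃ (u v : V) (p : G.Walk u v), p.IsPath ∧
      IsIndSet G {x : V | x ∉ p.support} := by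
  classical
  have := hG.nonempty
  obtain ⟨l, hne, hc, hd, hmax⟩ := exists_longest_path G
  refine ⟨_, _, Walk.ofSupport l hne hc, ?_, ?_⟩
  · rw [Walk.isPath_def, Walk.support_ofSupport]
    exact hd
  intro x hx y hy hxy
  simp only [Walk.support_ofSupport, Set.mem_ofPred_eq] at hx hy
  obtain ⟨hends, hadj, hdeg⟩ := degree_add_degree_lt_of_longest hG hne hc hd hmax hx
  have hcard : Fintype.card V ≤ G.degree (l.head hne) + G.degree (l.getLast hne) + 2 := by
    exact_mod_cast h.trans (add_le_add_left (minDegreeSum_two_le G hends hadj) 2)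
  have hlen : (x :: y :: l).length ≤ Fintype.card V :=
    List.Nodup.length_le_card (by simp [hx, hy, hd, hxy.ne])
  simp only [List.length_cons] at hlen
  omega
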